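/- Set K_c^{(2)}(β) := 1/(4βe^{−β}) + 1/(2β). (i) If 0 < β < log 4 and K = K_c^{(2)}(β), then as n → ∞ the distributions of S_n/n^{3/4} under P_{n,β,K} converge weakly to the probability distribution on ℝ with density proportional to exp(−G_{β,K}^{(4)}(0) x⁴/4!), where G_{β,K}^{(4)}(0) = −(2βK)⁴ c_β^{(4)}(0) > 0. (ii) If β = log 4 and K = K_c^{(2)}(β), then as n → ∞ the distributions of S_n/n^{5/6} under P_{n,β,K} converge weakly to the probability distribution on ℝ with density proportional to exp(−G_{β,K}^{(6)}(0) x⁶/6!), where G_{β,K}^{(6)}(0) = 2(2βK)⁶/9. -/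

import Mathlib

noncomputable section

open scoped BigOperators

/-- `c_β(t) = log[(1 + e^{−β}(e^t + e^{−t}))/(1 + 2e^{−β})]`. -/
def cBeta (β t : ℝ) : ℝ :=
  Real.log ((1 + Real.exp (-β) * (Real.exp t + Real.exp (-t))) / (1 + 2 * Real.exp (-β)))

/-- `G_{β,K}(z) = βK z² − c_β(2βK z)`. -/
def Gfun (β K z : ℝ) : ℝ := β * K * z ^ 2 - cBeta β (2 * β * K * z)

/-- The spin space `Λ = {-1, 0, 1} ⊆ ℤ`. -/
abbrev Spin : Type := ({-1, 0, 1} : Finset ℤ)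

/-- The total spin `S_n(ω) = Σ_j ω_j` (as a real number). -/
def totalSpin (n : ℕ) (ω : Fin n → Spin) : ℝ := ∑ j, ((ω j : ℤ) : ℝ)

/-- The energy `H_{n,K}(ω) = Σ_j ω_j² − (K/n)(Σ_j ω_j)²`. -/
def ham (K : ℝ) (n : ℕ) (ω : Fin n → Spin) : ℝ :=
  (∑ j, ((ω j : ℤ) : ℝ) ^ 2) - (K / n) * (∑ j, ((ω j : ℤ) : ℝ)) ^ 2

/-- The canonical ensemble `P_{n,β,K}`: the probability mass of a configuration
`ω ∈ Λⁿ` is proportional to `exp(−β H_{n,K}(ω))`. -/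
def canonP (β K : ℝ) (n : ℕ) (ω : Fin n → Spin) : ℝ :=
  Real.exp (-β * ham K n ω) / ∑ ω' : Fin n → Spin, Real.exp (-β * ham K n ω')

/-- The second-order critical value `K_c^{(2)}(β) = 1/(4βe^{−β}) + 1/(2β)`. -/
def Kc2 (β : ℝ) : ℝ := 1 / (4 * β * Real.exp (-β)) + 1 / (2 * β)

/-!
Adding to `S_n / n ^ (1 - 1 / m)` an independent centred Gaussian of variance
`n ^ (2 / m) / (2βKn)` cancels the quadratic interaction (the Hubbard–Stratonovich transformation),
so the smoothed law has density proportional to `exp (-n G(x / n ^ (1 / m)))`. If `m` is the order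
of the minimum of `G` at `0`, this density converges pointwise to `exp (-G⁽ᵐ⁾(0) x ^ m / m!)`, and
`G(z) ≥ c * min (z ^ m) (z ^ 2)` provides an integrable bound, so dominated convergence applies.
For `m > 2` the added variance tends to `0`, and Lévy's continuity theorem removes the Gaussian.

Let `w` be the variance of a single spin, the second derivative of `c_β` at `0`. Then
`exp c_β(t) = 1 + w (cosh t - 1)`, and `2βK = w⁻¹` at the critical value. That `0` is the unique
minimum point of `G` is the strict sub-Gaussian bound `1 + w (cosh t - 1) < exp (w t² / 2)`, which
for `w ≥ 1/3` follows from comparing the power series term by term. The fourth cumulant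
`w (1 - 3w)` vanishes exactly at `w = 1/3`, that is, at `β = log 4`, which is why the order jumps
from `4` to `6` there.
-/

open MeasureTheory ProbabilityTheory Filter Asymptotics Topology
open scoped Nat NNReal

theorem iteratedDeriv_succ_exp_comp {f : ℝ → ℝ} {n : ℕ} (hf : ContDiff ℝ (n + 1) f) (x : ℝ) :
    iteratedDeriv (n + 1) (fun x ↦ Real.exp (f x)) x = ∑ k ∈ Finset.range (n + 1),
      n.choose k * iteratedDeriv k (fun x ↦ Real.exp (f x)) x * iteratedDeriv (n - k + 1) f x := by
  have hderiv : deriv (fun x ↦ Real.exp (f x)) = fun x ↦ Real.exp (f x) * deriv f x :=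
    funext fun x ↦ ((hf.differentiable (by simp)).differentiableAt.hasDerivAt.exp).deriv
  have hf' : ContDiff ℝ n (deriv f) := (contDiff_succ_iff_deriv.mp hf).2.2
  rw [iteratedDeriv_succ', hderiv, iteratedDeriv_fun_mul
    (hf.of_le (by norm_cast; lia)).exp.contDiffAt hf'.contDiffAt]
  simp only [iteratedDeriv_succ']

theorem three_pow_mul_two_pow_mul_factorial_le (k : ℕ) :
    3 ^ k * (2 ^ (k + 1) * (k + 1)!) ≤ (2 * (k + 1))! := by
  induction k with
  | zero => decide
  | succ k ih =>
    have hfact : (2 * (k + 2))! = (2 * k + 4) * ((2 * k + 3) * (2 * (k + 1))!) := rfl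
    calc 3 ^ (k + 1) * (2 ^ (k + 2) * (k + 2)!)
        = (2 * k + 4) * (3 * (3 ^ k * (2 ^ (k + 1) * (k + 1)!))) := by
          rw [Nat.factorial_succ (k + 1)]; ring
      _ ≤ (2 * k + 4) * ((2 * k + 3) * (2 * (k + 1))!) := by gcongr; lia
      _ = (2 * (k + 2))! := hfact.symm

theorem div_factorial_two_mul_le {w : ℝ} (hw : 1 / 3 ≤ w) (k : ℕ) :
    w / (2 * (k + 1))! ≤ (w / 2) ^ (k + 1) / (k + 1)! := by
  have hfact : (3 : ℝ) ^ k * (2 ^ (k + 1) * (k + 1)!) ≤ (2 * (k + 1))! :=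
    mod_cast three_pow_mul_two_pow_mul_factorial_le k
  have hw0 : 0 < w := by linarith
  have hpow : (1 : ℝ) ≤ 3 ^ k * w ^ k := by
    rw [← mul_pow]; exact one_le_pow₀ (by linarith)
  rw [div_pow, div_div, div_le_div_iff₀ (by positivity) (by positivity)]
  calc w * (2 ^ (k + 1) * (k + 1)!)
      ≤ w * (3 ^ k * w ^ k * (2 ^ (k + 1) * (k + 1)!)) :=
        mul_le_mul_of_nonneg_left (le_mul_of_one_le_left (by positivity) hpow) hw0.le
    _ = w ^ (k + 1) * (3 ^ k * (2 ^ (k + 1) * (k + 1)!)) := by ring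
    _ ≤ w ^ (k + 1) * (2 * (k + 1))! := by gcongr

theorem one_add_mul_cosh_sub_one_lt_exp {w t : ℝ} (hw : 1 / 3 ≤ w) (ht : t ≠ 0) :
    1 + w * (Real.cosh t - 1) < Real.exp (w * t ^ 2 / 2) := by
  have hcosh : HasSum (fun k : ℕ ↦ w * (t ^ (2 * (k + 1)) / (2 * (k + 1))!))
      (w * (Real.cosh t - 1)) := by
    simpa using ((hasSum_nat_add_iff' 1).mpr (Real.hasSum_cosh t)).mul_left w
  have hexp : HasSum (fun k : ℕ ↦ (w * t ^ 2 / 2) ^ (k + 1) / (k + 1)!)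
      (Real.exp (w * t ^ 2 / 2) - 1) := by
    have := NormedSpace.expSeries_div_hasSum_exp (𝔸 := ℝ) (w * t ^ 2 / 2)
    rw [← Real.exp_eq_exp_ℝ] at this
    simpa using (hasSum_nat_add_iff' 1).mpr this
  have hterm (k : ℕ) : w * (t ^ (2 * (k + 1)) / (2 * (k + 1))!) ≤
      (w * t ^ 2 / 2) ^ (k + 1) / (k + 1)! :=
    calc w * (t ^ (2 * (k + 1)) / (2 * (k + 1))!)
        = w / (2 * (k + 1))! * (t ^ 2) ^ (k + 1) := by ring
      _ ≤ (w / 2) ^ (k + 1) / (k + 1)! * (t ^ 2) ^ (k + 1) := by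
          gcongr ?_ * _; exact div_factorial_two_mul_le hw k
      _ = (w * t ^ 2 / 2) ^ (k + 1) / (k + 1)! := by ring
  -- At `w = 1 / 3` the terms of index `0` and `1` agree.
  have hstrict : w * (t ^ (2 * (2 + 1)) / (2 * (2 + 1))!) <
      (w * t ^ 2 / 2) ^ (2 + 1) / (2 + 1)! := by
    have hgap : 0 < w * t ^ 6 * (15 * w ^ 2 - 1) :=
      mul_pos (mul_pos (by linarith) (by positivity)) (by nlinarith)
    norm_num [Nat.factorial]
    linarith
  linarith [hasSum_lt hterm hstrict hcosh hexp]

theorem iteratedDeriv_eq_zero_of_even_of_odd {E : Type*} [NormedAddCommGroup E]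
    [NormedSpace ℝ E] {f : ℝ → E} {n : ℕ} (hf : f.Even) (hn : Odd n) :
    iteratedDeriv n f 0 = 0 := by
  have : IsAddTorsionFree E := .of_isTorsionFree ℝ E
  have hreflect := iteratedDeriv_comp_neg n f 0
  simp only [hf _, neg_zero, hn.neg_one_pow, neg_smul, one_smul] at hreflect
  exact self_eq_neg.mp hreflect

-- Moment–cumulant relations: `f` is a cumulant generating function, `exp ∘ f` the moment one.
theorem iteratedDeriv_two_eq_exp_comp_of_even {f : ℝ → ℝ} (hsmooth : ContDiff ℝ 2 f)
    (hf : f.Even) (hf0 : f 0 = 0) :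
    iteratedDeriv 2 f 0 = iteratedDeriv 2 (fun x ↦ Real.exp (f x)) 0 := by
  have hderiv : iteratedDeriv 1 f 0 = 0 := iteratedDeriv_eq_zero_of_even_of_odd hf odd_one
  have hrec := iteratedDeriv_succ_exp_comp (n := 1) hsmooth 0
  simp only [Finset.sum_range_succ, hderiv, hf0, iteratedDeriv_zero, Real.exp_zero] at hrec
  simpa using hrec.symm

theorem iteratedDeriv_four_eq_exp_comp_of_even {f : ℝ → ℝ} (hsmooth : ContDiff ℝ 4 f)
    (hf : f.Even) (hf0 : f 0 = 0) :
    iteratedDeriv 4 f 0 = iteratedDeriv 4 (fun x ↦ Real.exp (f x)) 0 -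
      3 * iteratedDeriv 2 (fun x ↦ Real.exp (f x)) 0 ^ 2 := by
  have hodd {k : ℕ} (hk : Odd k) : iteratedDeriv k f 0 = 0 :=
    iteratedDeriv_eq_zero_of_even_of_odd hf hk
  have htwo := iteratedDeriv_two_eq_exp_comp_of_even (hsmooth.of_le (by norm_num)) hf hf0
  have hrec := iteratedDeriv_succ_exp_comp (n := 3) hsmooth 0
  simp only [Finset.sum_range_succ, Finset.sum_range_zero, Nat.sub_zero, Nat.reduceSub,
    Nat.reduceAdd, hodd (k := 1) (by decide), hodd (k := 3) (by decide), htwo, hf0,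
    iteratedDeriv_zero, Real.exp_zero] at hrec
  norm_num [Nat.choose] at hrec
  linarith

theorem iteratedDeriv_six_eq_exp_comp_of_even {f : ℝ → ℝ} (hsmooth : ContDiff ℝ 6 f)
    (hf : f.Even) (hf0 : f 0 = 0) :
    iteratedDeriv 6 f 0 = iteratedDeriv 6 (fun x ↦ Real.exp (f x)) 0 -
      15 * iteratedDeriv 4 (fun x ↦ Real.exp (f x)) 0 *
        iteratedDeriv 2 (fun x ↦ Real.exp (f x)) 0 +
      30 * iteratedDeriv 2 (fun x ↦ Real.exp (f x)) 0 ^ 3 := by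
  have hodd {k : ℕ} (hk : Odd k) : iteratedDeriv k f 0 = 0 :=
    iteratedDeriv_eq_zero_of_even_of_odd hf hk
  have htwo := iteratedDeriv_two_eq_exp_comp_of_even (hsmooth.of_le (by norm_num)) hf hf0
  have hfour := iteratedDeriv_four_eq_exp_comp_of_even (hsmooth.of_le (by norm_num)) hf hf0
  have hrec := iteratedDeriv_succ_exp_comp (n := 5) hsmooth 0
  simp only [Finset.sum_range_succ, Finset.sum_range_zero, Nat.sub_zero, Nat.reduceSub,
    Nat.reduceAdd, hodd (k := 1) (by decide), hodd (k := 3) (by decide),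
    hodd (k := 5) (by decide), htwo, hfour, hf0, iteratedDeriv_zero, Real.exp_zero] at hrec
  norm_num [Nat.choose] at hrec
  linarith

theorem isBigO_top_of_nhds_of_cocompact {X E F : Type*} [TopologicalSpace X] [Norm E]
    [SeminormedAddCommGroup F] {f : X → E} {g : X → F} (hnhds : ∀ x, f =O[𝓝 x] g)
    (hcocompact : f =O[cocompact X] g) : f =O[⊤] g := by
  obtain ⟨c, hc⟩ := hcocompact.bound
  obtain ⟨K, hK, hKc⟩ := mem_cocompact.mp hc
  have hcompact : f =O[𝓟 K] g := by
    refine hK.induction_on (p := fun s ↦ f =O[𝓟 s] g) ?_ (fun s t hst h ↦ ?_)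
      (fun s t hs ht ↦ ?_) (fun x _ ↦ ?_)
    · simp only [principal_empty, isBigO_bot]
    · exact h.mono (principal_mono.mpr hst)
    · exact sup_principal (s := s) (t := t) ▸ hs.sup ht
    · obtain ⟨C, hC⟩ := (hnhds x).bound
      exact ⟨_, mem_nhdsWithin_of_mem_nhds hC, isBigO_principal.mpr ⟨C, fun _ h ↦ h⟩⟩
  have hcompl : f =O[𝓟 Kᶜ] g := isBigO_principal.mpr ⟨c, fun x hx ↦ hKc hx⟩
  simpa only [sup_principal, Set.union_compl_self, principal_univ] using hcompact.sup hcompl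

theorem isBigO_nhds_of_continuousAt_of_ne_zero {X E F : Type*} [TopologicalSpace X]
    [NormedAddCommGroup E] [NormedAddCommGroup F] {f : X → E} {g : X → F} {x : X}
    (hf : ContinuousAt f x) (hg : ContinuousAt g x) (hgx : g x ≠ 0) : f =O[𝓝 x] g :=
  (isBigO_const_of_tendsto hf hgx).trans
    ((isEquivalent_const_iff_tendsto hgx).mpr hg).isBigO_symm

theorem isEquivalent_taylor_of_iteratedDeriv_eq_zero {f : ℝ → ℝ} {x₀ : ℝ} {m : ℕ}
    (hf : ContDiff ℝ m f) (hlow : ∀ k < m, iteratedDeriv k f x₀ = 0)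
    (hm : iteratedDeriv m f x₀ ≠ 0) :
    f ~[𝓝 x₀] fun x ↦ iteratedDeriv m f x₀ / m ! * (x - x₀) ^ m := by
  have htaylor (x : ℝ) : taylorWithinEval f m Set.univ x₀ x =
      iteratedDeriv m f x₀ / m ! * (x - x₀) ^ m := by
    rw [taylor_within_apply, Finset.sum_range_succ, Finset.sum_eq_zero]
    · simp only [iteratedDerivWithin_univ, smul_eq_mul, zero_add]
      ring
    · intro k hk
      rw [iteratedDerivWithin_univ, hlow k (Finset.mem_range.mp hk), smul_zero]
  have hrem := taylor_isLittleO_univ (x₀ := x₀) hf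
  simp only [htaylor] at hrem
  exact hrem.trans_isBigO (isBigO_self_const_mul (by positivity) _ _)

theorem tendsto_mul_comp_div_rpow_inv {f : ℝ → ℝ} {L : ℝ} {m : ℕ} (hm : m ≠ 0)
    (hf : f ~[𝓝 0] fun z ↦ L * z ^ m) (x : ℝ) :
    Tendsto (fun r ↦ r * f (x / r ^ (m : ℝ)⁻¹)) atTop (𝓝 (L * x ^ m)) := by
  have hz : Tendsto (fun r : ℝ ↦ x / r ^ (m : ℝ)⁻¹) atTop (𝓝 0) :=
    (tendsto_rpow_atTop (by positivity)).const_div_atTop x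
  have heq := (IsEquivalent.refl (u := fun r : ℝ ↦ r)).mul (hf.comp_tendsto hz)
  refine heq.symm.tendsto_nhds (tendsto_const_nhds.congr' ?_)
  filter_upwards [eventually_gt_atTop 0] with r hr
  simp only [Pi.mul_apply, Function.comp_apply, div_pow, Real.rpow_inv_natCast_pow hr.le hm]
  field_simp

theorem exists_pos_mul_min_pow_le {f : ℝ → ℝ} {L : ℝ} {m : ℕ} (hL : L ≠ 0)
    (hf : Continuous f) (hpos : ∀ z, z ≠ 0 → 0 < f z) (hzero : f ~[𝓝 0] fun z ↦ L * z ^ m)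
    (hinfty : (fun z : ℝ ↦ z ^ 2) =O[cocompact ℝ] f) (hm : Even m) :
    ∃ c > 0, ∀ z, c * min (z ^ m) (z ^ 2) ≤ f z := by
  have hpow (z : ℝ) : 0 ≤ z ^ m := hm.pow_nonneg z
  have hmin : (fun z : ℝ ↦ min (z ^ m) (z ^ 2)) =O[⊤] f := by
    refine isBigO_top_of_nhds_of_cocompact (fun z ↦ ?_) ?_
    · rcases eq_or_ne z 0 with rfl | hz
      · refine IsBigO.trans (.of_norm_le fun z ↦ ?_)
          ((isBigO_self_const_mul hL _ _).trans hzero.isBigO_symm)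
        rw [Real.norm_of_nonneg (le_min (hpow z) (sq_nonneg z))]
        exact min_le_left _ _
      · exact isBigO_nhds_of_continuousAt_of_ne_zero (by fun_prop) hf.continuousAt (hpos z hz).ne'
    · refine IsBigO.trans (.of_norm_le fun z ↦ ?_) hinfty
      rw [Real.norm_of_nonneg (le_min (hpow z) (sq_nonneg z))]
      exact min_le_right _ _
  obtain ⟨C, hC, hbound⟩ := hmin.exists_pos
  have hnonneg (z : ℝ) : 0 ≤ f z := by
    rcases eq_or_ne z 0 with rfl | hz
    · refine ge_of_tendsto (hf.continuousWithinAt (s := {0}ᶜ)) ?_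
      exact eventually_nhdsWithin_of_forall fun z hz ↦ (hpos z hz).le
    · exact (hpos z hz).le
  refine ⟨C⁻¹, inv_pos.2 hC, fun z ↦ ?_⟩
  have := isBigOWith_top.1 hbound z
  rwa [Real.norm_of_nonneg (le_min (hpow z) (sq_nonneg z)), Real.norm_of_nonneg (hnonneg z),
    ← inv_mul_le_iff₀ hC] at this

theorem tendsto_sq_rpow_inv_div {c : ℝ} {m : ℕ} (hm : 2 < m) :
    Tendsto (fun n : ℕ ↦ ((n : ℝ) ^ (m : ℝ)⁻¹) ^ 2 / (c * n)) atTop (𝓝 0) := by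
  have hexponent : 2 * (m : ℝ)⁻¹ < 1 := by
    rw [← div_eq_mul_inv, div_lt_one (by positivity)]
    exact_mod_cast hm
  have hdecay := ((tendsto_rpow_neg_atTop (sub_pos.mpr hexponent)).comp
    tendsto_natCast_atTop_atTop).const_mul c⁻¹
  rw [mul_zero] at hdecay
  refine hdecay.congr' ?_
  filter_upwards [eventually_gt_atTop 0] with n hn
  have hn0 : (0 : ℝ) < n := by positivity
  rw [Function.comp_apply, neg_sub, Real.rpow_sub hn0, mul_comm 2, Real.rpow_mul hn0.le,
    Real.rpow_one, Real.rpow_two]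
  field_simp

theorem sq_sub_one_le_pow {m : ℕ} (hm : Even m) (hm0 : m ≠ 0) (x : ℝ) : x ^ 2 - 1 ≤ x ^ m := by
  obtain ⟨k, rfl⟩ := hm
  rw [← two_mul, pow_mul]
  rcases le_total 1 (x ^ 2) with hx | hx
  · linarith [le_self_pow₀ hx (show k ≠ 0 by lia)]
  · linarith [pow_nonneg (sq_nonneg x) k]

theorem tendsto_integral_tilted_of_dominated {α ι E : Type*} {_ : MeasurableSpace α}
    [NormedAddCommGroup E] [NormedSpace ℝ E] {μ : Measure α} [NeZero μ] {l : Filter ι}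
    [l.IsCountablyGenerated] {f : ι → α → ℝ} {f₀ bound : α → ℝ} {g : α → E} {C : ℝ}
    (hf : ∀ᶠ i in l, AEMeasurable (f i) μ)
    (hbound : ∀ᶠ i in l, ∀ᵐ x ∂μ, Real.exp (f i x) ≤ bound x) (hint : Integrable bound μ)
    (hlim : ∀ᵐ x ∂μ, Tendsto (f · x) l (𝓝 (f₀ x)))
    (hf₀ : Integrable (fun x ↦ Real.exp (f₀ x)) μ)
    (hg : AEStronglyMeasurable g μ) (hgC : ∀ x, ‖g x‖ ≤ C) :
    Tendsto (fun i ↦ ∫ x, g x ∂(μ.tilted (f i))) l (𝓝 (∫ x, g x ∂(μ.tilted f₀))) := by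
  have hexp : ∀ᶠ i in l, AEStronglyMeasurable (fun x ↦ Real.exp (f i x)) μ :=
    hf.mono fun i hi ↦ (Real.measurable_exp.comp_aemeasurable hi).aestronglyMeasurable
  have hnum : Tendsto (fun i ↦ ∫ x, Real.exp (f i x) • g x ∂μ) l
      (𝓝 (∫ x, Real.exp (f₀ x) • g x ∂μ)) := by
    refine tendsto_integral_filter_of_dominated_convergence (fun x ↦ bound x * C)
      (hexp.mono fun i hi ↦ hi.smul hg) ?_ (hint.mul_const C) ?_
    · filter_upwards [hbound] with i hi
      filter_upwards [hi] with x hx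
      rw [norm_smul, Real.norm_of_nonneg (Real.exp_nonneg _)]
      exact mul_le_mul hx (hgC x) (norm_nonneg _) ((Real.exp_nonneg _).trans hx)
    · filter_upwards [hlim] with x hx
      exact ((Real.continuous_exp.tendsto _).comp hx).smul_const (g x)
  have hden : Tendsto (fun i ↦ ∫ x, Real.exp (f i x) ∂μ) l (𝓝 (∫ x, Real.exp (f₀ x) ∂μ)) := by
    refine tendsto_integral_filter_of_dominated_convergence bound hexp ?_ hint ?_
    · simpa only [Real.norm_of_nonneg (Real.exp_nonneg _)] using hbound
    · filter_upwards [hlim] with x hx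
      exact (Real.continuous_exp.tendsto _).comp hx
  have hnormalize (f : α → ℝ) : ∫ x, g x ∂(μ.tilted f) =
      (∫ x, Real.exp (f x) ∂μ)⁻¹ • ∫ x, Real.exp (f x) • g x ∂μ := by
    simp only [integral_tilted, div_eq_inv_mul, mul_smul, integral_smul]
  simp only [hnormalize]
  exact (hden.inv₀ (integral_exp_pos hf₀).ne').smul hnum

theorem eq_tilted_of_eq_withDensity_mul_exp {α : Type*} {_ : MeasurableSpace α} {μ ν : Measure α}
    [IsProbabilityMeasure ν] {f : α → ℝ} {c : ℝ} (hf : AEMeasurable f μ) (hc : 0 ≤ c)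
    (hν : ν = μ.withDensity fun x ↦ ENNReal.ofReal (c * Real.exp (f x))) : ν = μ.tilted f := by
  have hmass : c * ∫ x, Real.exp (f x) ∂μ = 1 := by
    rw [← integral_const_mul, integral_eq_lintegral_of_nonneg_ae
      (.of_forall fun x ↦ mul_nonneg hc (Real.exp_nonneg _)) (by fun_prop),
      ← setLIntegral_univ, ← withDensity_apply _ .univ, ← hν, measure_univ, ENNReal.toReal_one]
  simp only [hν, Measure.tilted, eq_inv_of_mul_eq_one_left hmass, div_eq_inv_mul]

theorem conv_gaussianReal_eq_withDensity (μ : Measure ℝ) [SFinite μ] {v : ℝ≥0} (hv : v ≠ 0) :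
    μ ∗ gaussianReal 0 v = volume.withDensity fun x ↦ ∫⁻ y, gaussianPDF y v x ∂μ := by
  refine Measure.ext_of_lintegral _ fun f hf ↦ ?_
  have hshift (y : ℝ) : ∫⁻ z, f (y + z) ∂(gaussianReal 0 v) = ∫⁻ x, gaussianPDF y v x * f x := by
    rw [← lintegral_map hf (measurable_const_add y), gaussianReal_map_const_add, zero_add,
      gaussianReal_of_var_ne_zero _ hv,
      lintegral_withDensity_eq_lintegral_mul _ (measurable_gaussianPDF y v) hf]
    simp only [Pi.mul_apply]
  have hmeas : Measurable fun p : ℝ × ℝ ↦ gaussianPDF p.1 v p.2 := by fun_prop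
  rw [Measure.lintegral_conv hf, lintegral_withDensity_eq_lintegral_mul _
    hmeas.lintegral_prod_left' hf]
  simp only [hshift, Pi.mul_apply]
  rw [lintegral_lintegral_swap (by fun_prop)]
  exact lintegral_congr fun x ↦ lintegral_mul_const _ (by fun_prop)

theorem tendsto_of_tendsto_charFun_conv_gaussianReal {μ : ℕ → ProbabilityMeasure ℝ}
    {ν : ProbabilityMeasure ℝ} {v : ℕ → ℝ≥0} (hv : Tendsto v atTop (𝓝 0))
    (h : ∀ t, Tendsto (fun n ↦ charFun ((μ n : Measure ℝ) ∗ gaussianReal 0 (v n)) t) atTop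
      (𝓝 (charFun (ν : Measure ℝ) t))) :
    Tendsto μ atTop (𝓝 ν) := by
  refine ProbabilityMeasure.tendsto_of_tendsto_charFun fun t ↦ ?_
  have hgauss : Tendsto (fun n ↦ charFun (gaussianReal 0 (v n)) t) atTop (𝓝 1) := by
    simp only [charFun_gaussianReal]
    have : Continuous fun s : ℝ≥0 ↦ Complex.exp (t * (0 : ℝ) * Complex.I - s * t ^ 2 / 2) := by
      fun_prop
    simpa [Function.comp_def] using (this.tendsto 0).comp hv
  have hquot := (h t).div hgauss one_ne_zero
  rw [div_one] at hquot
  refine hquot.congr fun n ↦ ?_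
  rw [Pi.div_apply, charFun_conv, mul_div_cancel_right₀]
  rw [charFun_gaussianReal]
  exact Complex.exp_ne_zero _

theorem sq_sub_one_le_mul_min_pow {m : ℕ} (hm : Even m) (hm2 : 2 ≤ m) {r : ℝ} (hr : 1 ≤ r)
    (x : ℝ) :
    x ^ 2 - 1 ≤ r * min ((x / r ^ (m : ℝ)⁻¹) ^ m) ((x / r ^ (m : ℝ)⁻¹) ^ 2) := by
  have hr0 : 0 < r := by linarith
  have hroot : (r ^ (m : ℝ)⁻¹) ^ m = r := Real.rpow_inv_natCast_pow hr0.le (by lia)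
  have hroot_sq : (r ^ (m : ℝ)⁻¹) ^ 2 ≤ r :=
    (pow_le_pow_right₀ (Real.one_le_rpow hr (by positivity)) hm2).trans_eq hroot
  rw [mul_min_of_nonneg _ _ hr0.le, div_pow, div_pow, hroot, mul_div_cancel₀ _ hr0.ne']
  refine le_min (sq_sub_one_le_pow hm (by lia) x) ?_
  calc x ^ 2 - 1 ≤ x ^ 2 := by linarith
    _ ≤ r * (x ^ 2 / (r ^ (m : ℝ)⁻¹) ^ 2) := by
      rw [mul_div_left_comm]
      exact le_mul_of_one_le_right (sq_nonneg x) ((one_le_div (by positivity)).mpr hroot_sq)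

theorem integrable_exp_neg_mul_sq_sub_one {c : ℝ} (hc : 0 < c) :
    Integrable fun x : ℝ ↦ Real.exp (-(c * (x ^ 2 - 1))) := by
  convert (integrable_exp_neg_mul_sq hc).mul_const (Real.exp c) using 2 with x
  rw [← Real.exp_add]
  ring_nf

theorem integrable_exp_neg_mul_pow {c : ℝ} {m : ℕ} (hc : 0 < c) (hm : Even m) (hm0 : m ≠ 0) :
    Integrable fun x : ℝ ↦ Real.exp (-(c * x ^ m)) := by
  refine (integrable_exp_neg_mul_sq_sub_one hc).mono' (by fun_prop) (.of_forall fun x ↦ ?_)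
  rw [Real.norm_of_nonneg (Real.exp_nonneg _)]
  gcongr
  exact sq_sub_one_le_pow hm hm0 x

theorem tendsto_integral_tilted_neg_mul_comp_div {E : Type*} [NormedAddCommGroup E]
    [NormedSpace ℝ E] {f : ℝ → ℝ} {g : ℝ → E} {L C : ℝ} {m : ℕ} (hm : Even m) (hm2 : 2 ≤ m)
    (hL : 0 < L) (hf : Continuous f) (hpos : ∀ z, z ≠ 0 → 0 < f z)
    (hzero : f ~[𝓝 0] fun z ↦ L * z ^ m) (hinfty : (fun z : ℝ ↦ z ^ 2) =O[cocompact ℝ] f)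
    (hg : AEStronglyMeasurable g) (hgC : ∀ x, ‖g x‖ ≤ C) :
    Tendsto (fun r : ℝ ↦ ∫ x, g x ∂(volume.tilted fun x ↦ -(r * f (x / r ^ (m : ℝ)⁻¹)))) atTop
      (𝓝 (∫ x, g x ∂(volume.tilted fun x ↦ -(L * x ^ m)))) := by
  obtain ⟨c, hc, hmin⟩ := exists_pos_mul_min_pow_le hL.ne' hf hpos hzero hinfty hm
  refine tendsto_integral_tilted_of_dominated (.of_forall fun r ↦ by fun_prop) ?_
    (integrable_exp_neg_mul_sq_sub_one hc)
    (.of_forall fun x ↦ (tendsto_mul_comp_div_rpow_inv (by lia) hzero x).neg)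
    (integrable_exp_neg_mul_pow hL hm (by lia)) hg hgC
  filter_upwards [eventually_ge_atTop 1] with r hr
  refine .of_forall fun x ↦ Real.exp_le_exp.mpr (neg_le_neg ?_)
  calc c * (x ^ 2 - 1)
      ≤ c * (r * min ((x / r ^ (m : ℝ)⁻¹) ^ m) ((x / r ^ (m : ℝ)⁻¹) ^ 2)) := by
        gcongr; exact sq_sub_one_le_mul_min_pow hm hm2 hr x
    _ = r * (c * min ((x / r ^ (m : ℝ)⁻¹) ^ m) ((x / r ^ (m : ℝ)⁻¹) ^ 2)) := mul_left_comm _ _ _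
    _ ≤ r * f (x / r ^ (m : ℝ)⁻¹) := by gcongr; exact hmin _

/-- The variance of a single spin under the a priori law on `{-1, 0, 1}` proportional to
`exp (-β * ω ^ 2)`, which is the second derivative of `c_β` at `0`. -/
def spinVariance (β : ℝ) : ℝ := 2 * Real.exp (-β) / (1 + 2 * Real.exp (-β))

theorem spinVariance_pos (β : ℝ) : 0 < spinVariance β := by
  unfold spinVariance; positivity

theorem spinVariance_lt_one (β : ℝ) : spinVariance β < 1 := by
  rw [spinVariance, div_lt_one (by positivity)]; linarith

theorem spinVariance_strictAnti : StrictAnti spinVariance := fun β β' h ↦ by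
  have hexp : Real.exp (-β') < Real.exp (-β) := Real.exp_lt_exp.mpr (neg_lt_neg h)
  rw [spinVariance, spinVariance, div_lt_div_iff₀ (by positivity) (by positivity)]
  linarith

theorem spinVariance_log_four : spinVariance (Real.log 4) = 1 / 3 := by
  rw [spinVariance, Real.exp_neg, Real.exp_log four_pos]
  norm_num

theorem two_mul_mul_Kc2 {β : ℝ} (hβ : β ≠ 0) : 2 * β * Kc2 β = (spinVariance β)⁻¹ := by
  rw [Kc2, spinVariance]
  field_simp
  ring

theorem one_add_spinVariance_mul_pos (β t : ℝ) :
    0 < 1 + spinVariance β * (Real.cosh t - 1) := by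
  have := mul_nonneg (spinVariance_pos β).le (sub_nonneg.mpr (Real.one_le_cosh t))
  linarith

theorem cBeta_eq_log (β t : ℝ) :
    cBeta β t = Real.log (1 + spinVariance β * (Real.cosh t - 1)) := by
  rw [cBeta, spinVariance, Real.cosh_eq]
  congr 1
  field_simp
  ring

theorem exp_cBeta (β t : ℝ) :
    Real.exp (cBeta β t) = 1 + spinVariance β * (Real.cosh t - 1) := by
  rw [cBeta_eq_log, Real.exp_log (one_add_spinVariance_mul_pos β t)]

theorem contDiff_cBeta (β : ℝ) {n : WithTop ℕ∞} : ContDiff ℝ n (cBeta β) := by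
  simp only [funext (cBeta_eq_log β)]
  exact ContDiff.log (by fun_prop) fun t ↦ (one_add_spinVariance_mul_pos β t).ne'

theorem even_cBeta (β : ℝ) : (cBeta β).Even := fun t ↦ by
  rw [cBeta_eq_log, cBeta_eq_log, Real.cosh_neg]

theorem cBeta_zero (β : ℝ) : cBeta β 0 = 0 := by
  simp [cBeta_eq_log]

theorem cBeta_nonneg (β t : ℝ) : 0 ≤ cBeta β t := by
  rw [cBeta_eq_log]
  exact Real.log_nonneg (le_add_of_nonneg_right
    (mul_nonneg (spinVariance_pos β).le (sub_nonneg.mpr (Real.one_le_cosh t))))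

theorem cBeta_le_abs (β t : ℝ) : cBeta β t ≤ |t| := by
  have hcosh : Real.cosh t ≤ Real.exp |t| := by
    rw [← Real.cosh_abs, Real.cosh_eq]
    linarith [Real.exp_le_exp.mpr (neg_le_self (abs_nonneg t))]
  rw [← Real.exp_le_exp, exp_cBeta]
  nlinarith [spinVariance_pos β, spinVariance_lt_one β, Real.one_le_cosh t]

theorem iteratedDeriv_exp_cBeta_zero (β : ℝ) {n : ℕ} (hn : Even n) (hn0 : n ≠ 0) :
    iteratedDeriv n (fun t ↦ Real.exp (cBeta β t)) 0 = spinVariance β := by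
  obtain ⟨k, rfl⟩ := hn
  have hexp : (fun t ↦ Real.exp (cBeta β t)) =
      fun t ↦ (1 - spinVariance β) + spinVariance β * Real.cosh t := by
    funext t
    rw [exp_cBeta]
    ring
  rw [hexp, iteratedDeriv_const_add (Nat.pos_of_ne_zero hn0), iteratedDeriv_const_mul_field,
    ← two_mul, Real.iteratedDeriv_even_cosh, Real.cosh_zero, mul_one]

theorem iteratedDeriv_two_cBeta_zero (β : ℝ) :
    iteratedDeriv 2 (cBeta β) 0 = spinVariance β := by
  rw [iteratedDeriv_two_eq_exp_comp_of_even (contDiff_cBeta β) (even_cBeta β) (cBeta_zero β),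
    iteratedDeriv_exp_cBeta_zero β (by decide) two_ne_zero]

theorem iteratedDeriv_four_cBeta_zero (β : ℝ) :
    iteratedDeriv 4 (cBeta β) 0 = spinVariance β * (1 - 3 * spinVariance β) := by
  rw [iteratedDeriv_four_eq_exp_comp_of_even (contDiff_cBeta β) (even_cBeta β) (cBeta_zero β),
    iteratedDeriv_exp_cBeta_zero β (by decide) two_ne_zero,
    iteratedDeriv_exp_cBeta_zero β (by decide) four_ne_zero]
  ring

theorem iteratedDeriv_six_cBeta_zero (β : ℝ) :
    iteratedDeriv 6 (cBeta β) 0 =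
      spinVariance β * (1 - 15 * spinVariance β + 30 * spinVariance β ^ 2) := by
  rw [iteratedDeriv_six_eq_exp_comp_of_even (contDiff_cBeta β) (even_cBeta β) (cBeta_zero β),
    iteratedDeriv_exp_cBeta_zero β (by decide) two_ne_zero,
    iteratedDeriv_exp_cBeta_zero β (by decide) four_ne_zero,
    iteratedDeriv_exp_cBeta_zero β (by decide) (by decide)]
  ring

theorem contDiff_Gfun (β K : ℝ) {n : WithTop ℕ∞} : ContDiff ℝ n (Gfun β K) := by
  have := contDiff_cBeta β (n := n)
  unfold Gfun
  fun_prop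

theorem continuous_Gfun (β K : ℝ) : Continuous (Gfun β K) :=
  (contDiff_Gfun β K (n := 0)).continuous

theorem even_Gfun (β K : ℝ) : (Gfun β K).Even := fun z ↦ by
  rw [Gfun, Gfun, neg_sq, mul_neg, even_cBeta]

theorem iteratedDeriv_Gfun_zero (β K : ℝ) (n : ℕ) :
    iteratedDeriv n (Gfun β K) 0 =
      (if n = 2 then 2 * β * K else 0) - (2 * β * K) ^ n * iteratedDeriv n (cBeta β) 0 := by
  have hc := contDiff_cBeta β (n := n)
  unfold Gfun
  rw [iteratedDeriv_fun_sub (by fun_prop) (by fun_prop), iteratedDeriv_const_mul_field,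
    iteratedDeriv_comp_const_mul hc, iteratedDeriv_fun_pow_zero]
  split_ifs with hn
  · simp [mul_comm (β * K), mul_assoc]
  · simp

theorem iteratedDeriv_Gfun_zero_of_two_lt (β K : ℝ) {n : ℕ} (hn : 2 < n) :
    iteratedDeriv n (Gfun β K) 0 = -(2 * β * K) ^ n * iteratedDeriv n (cBeta β) 0 := by
  rw [iteratedDeriv_Gfun_zero, if_neg hn.ne', zero_sub, neg_mul]

theorem iteratedDeriv_Gfun_zero_eq_zero_of_lt_four {β K : ℝ} (hK : 2 * β * K = (spinVariance β)⁻¹)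
    {k : ℕ} (hk : k < 4) : iteratedDeriv k (Gfun β K) 0 = 0 := by
  have hw := (spinVariance_pos β).ne'
  interval_cases k
  · simp [Gfun, cBeta_zero]
  · exact iteratedDeriv_eq_zero_of_even_of_odd (even_Gfun β K) odd_one
  · rw [iteratedDeriv_Gfun_zero, if_pos rfl, iteratedDeriv_two_cBeta_zero, hK]
    field_simp
    ring
  · exact iteratedDeriv_eq_zero_of_even_of_odd (even_Gfun β K) (by decide)

theorem iteratedDeriv_four_Gfun_zero_pos {β K : ℝ} (hw : 1 / 3 < spinVariance β)
    (hK : 2 * β * K = (spinVariance β)⁻¹) : 0 < iteratedDeriv 4 (Gfun β K) 0 := by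
  have hw0 := spinVariance_pos β
  rw [iteratedDeriv_Gfun_zero_of_two_lt β K (by norm_num), iteratedDeriv_four_cBeta_zero, hK,
    neg_mul, neg_pos]
  exact mul_neg_of_pos_of_neg (by positivity) (mul_neg_of_pos_of_neg hw0 (by linarith))

theorem iteratedDeriv_Gfun_zero_eq_zero_of_lt_six {β K : ℝ} (hw : spinVariance β = 1 / 3)
    (hK : 2 * β * K = (spinVariance β)⁻¹) {k : ℕ} (hk : k < 6) :
    iteratedDeriv k (Gfun β K) 0 = 0 := by
  obtain hk | rfl | rfl : k < 4 ∨ k = 4 ∨ k = 5 := by lia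
  · exact iteratedDeriv_Gfun_zero_eq_zero_of_lt_four hK hk
  · rw [iteratedDeriv_Gfun_zero_of_two_lt β K (by norm_num), iteratedDeriv_four_cBeta_zero, hw]
    norm_num
  · exact iteratedDeriv_eq_zero_of_even_of_odd (even_Gfun β K) (by decide)

theorem iteratedDeriv_six_Gfun_zero {β K : ℝ} (hw : spinVariance β = 1 / 3) :
    iteratedDeriv 6 (Gfun β K) 0 = 2 * (2 * β * K) ^ 6 / 9 := by
  rw [iteratedDeriv_Gfun_zero_of_two_lt β K (by norm_num), iteratedDeriv_six_cBeta_zero, hw]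
  ring

theorem Gfun_pos {β K z : ℝ} (hw : 1 / 3 ≤ spinVariance β)
    (hK : 2 * β * K = (spinVariance β)⁻¹) (hz : z ≠ 0) : 0 < Gfun β K z := by
  have hw0 := (spinVariance_pos β).ne'
  have hsub := one_add_mul_cosh_sub_one_lt_exp hw (mul_ne_zero (inv_ne_zero hw0) hz)
  have hquad : spinVariance β * ((spinVariance β)⁻¹ * z) ^ 2 / 2 = β * K * z ^ 2 := by
    rw [show β * K = (spinVariance β)⁻¹ / 2 by linarith]
    field_simp
  rw [← hK, ← exp_cBeta, hK, hquad, Real.exp_lt_exp, ← hK] at hsub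
  exact sub_pos.mpr hsub

theorem sq_isBigO_Gfun_cocompact {β K : ℝ} (hK : β * K ≠ 0) :
    (fun z : ℝ ↦ z ^ 2) =O[cocompact ℝ] Gfun β K := by
  have hc : (fun z ↦ cBeta β (2 * β * K * z)) =o[cocompact ℝ] fun z ↦ β * K * z ^ 2 := by
    have hlin : (fun z ↦ cBeta β (2 * β * K * z)) =O[cocompact ℝ] fun z : ℝ ↦ z ^ 1 := by
      refine .of_bound |2 * β * K| (.of_forall fun z ↦ ?_)
      rw [Real.norm_of_nonneg (cBeta_nonneg β _), pow_one, Real.norm_eq_abs, ← abs_mul]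
      exact cBeta_le_abs β _
    rw [isLittleO_const_mul_right_iff hK]
    rw [← Metric.cobounded_eq_cocompact] at hlin ⊢
    exact hlin.trans_isLittleO (isLittleO_pow_pow_cobounded_of_lt one_lt_two)
  exact (isBigO_self_const_mul hK _ _).trans (IsEquivalent.refl.sub_isLittleO hc).isBigO_symm

/-- The canonical ensemble `P_{n,β,K}` as a measure on configurations; its point masses are
`canonP β K n`. -/
def canonMeasure (β K : ℝ) (n : ℕ) : Measure (Fin n → Spin) :=
  Measure.count.tilted fun ω ↦ -β * ham K n ω

instance isProbabilityMeasure_canonMeasure (β K : ℝ) (n : ℕ) :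
    IsProbabilityMeasure (canonMeasure β K n) :=
  have : Nonempty Spin := ⟨0, by decide⟩
  isProbabilityMeasure_tilted .of_finite

theorem integral_canonMeasure {β K : ℝ} {n : ℕ} (f : (Fin n → Spin) → ℝ) :
    ∫ ω, f ω ∂(canonMeasure β K n) = ∑ ω, canonP β K n ω * f ω := by
  simp only [canonMeasure, integral_tilted, integral_count, canonP, smul_eq_mul]

theorem sum_exp_mul_totalSpin (β t : ℝ) (n : ℕ) :
    ∑ ω : Fin n → Spin, Real.exp (-β * ∑ j, ((ω j : ℤ) : ℝ) ^ 2 + t * totalSpin n ω) =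
      ((1 + 2 * Real.exp (-β)) * Real.exp (cBeta β t)) ^ n := by
  have hsite : ∑ s : Spin, Real.exp (-β * ((s : ℤ) : ℝ) ^ 2 + t * ((s : ℤ) : ℝ)) =
      (1 + 2 * Real.exp (-β)) * Real.exp (cBeta β t) := by
    rw [Finset.sum_coe_sort ({-1, 0, 1} : Finset ℤ)
      (fun s : ℤ ↦ Real.exp (-β * (s : ℝ) ^ 2 + t * (s : ℝ))), exp_cBeta, spinVariance,
      Real.cosh_eq, Finset.sum_insert (by decide), Finset.sum_insert (by decide),
      Finset.sum_singleton]
    simp [Real.exp_add]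
    field_simp
    ring
  simp only [← hsite, totalSpin, Finset.mul_sum, ← Finset.sum_add_distrib, Real.exp_sum,
    Fintype.sum_pow]

theorem exp_neg_ham_mul_gaussianPDFReal {β K r : ℝ} {n : ℕ} {v : ℝ≥0} (hr : r ≠ 0) (hn : n ≠ 0)
    (hv : 2 * β * K * n * v = r ^ 2) (ω : Fin n → Spin) (x : ℝ) :
    Real.exp (-β * ham K n ω) * gaussianPDFReal (totalSpin n ω * r / n) v x =
      (√(2 * Real.pi * v))⁻¹ * Real.exp (-(n * (β * K * (x / r) ^ 2))) *
        Real.exp (-β * ∑ j, ((ω j : ℤ) : ℝ) ^ 2 + 2 * β * K * (x / r) * totalSpin n ω) := by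
  have hn' : (n : ℝ) ≠ 0 := Nat.cast_ne_zero.mpr hn
  have hprecision : (2 * (v : ℝ))⁻¹ = β * K * n / r ^ 2 := by
    have hv0 : (v : ℝ) ≠ 0 := right_ne_zero_of_mul (hv.trans_ne (pow_ne_zero 2 hr))
    field_simp
    linarith
  have hexponent : -β * ham K n ω + -(x - totalSpin n ω * r / n) ^ 2 / (2 * v) =
      -(n * (β * K * (x / r) ^ 2)) +
        (-β * ∑ j, ((ω j : ℤ) : ℝ) ^ 2 + 2 * β * K * (x / r) * totalSpin n ω) := by
    rw [div_eq_mul_inv _ (2 * (v : ℝ)), hprecision, ham, ← totalSpin]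
    field_simp
    ring
  rw [gaussianPDFReal_def, mul_left_comm, ← Real.exp_add, hexponent, Real.exp_add, ← mul_assoc]

theorem sum_exp_neg_ham_mul_gaussianPDFReal {β K r : ℝ} {n : ℕ} {v : ℝ≥0} (hr : r ≠ 0)
    (hn : n ≠ 0) (hv : 2 * β * K * n * v = r ^ 2) (x : ℝ) :
    ∑ ω : Fin n → Spin, Real.exp (-β * ham K n ω) * gaussianPDFReal (totalSpin n ω * r / n) v x =
      (√(2 * Real.pi * v))⁻¹ * (1 + 2 * Real.exp (-β)) ^ n *
        Real.exp (-(n * Gfun β K (x / r))) := by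
  have hGfun : Real.exp (-(n * Gfun β K (x / r))) = Real.exp (-(n * (β * K * (x / r) ^ 2))) *
      Real.exp (cBeta β (2 * β * K * (x / r))) ^ n := by
    rw [← Real.exp_nat_mul, ← Real.exp_add, Gfun]
    ring_nf
  simp only [exp_neg_ham_mul_gaussianPDFReal hr hn hv, ← Finset.mul_sum,
    sum_exp_mul_totalSpin, hGfun, mul_pow]
  ring

theorem map_totalSpin_conv_gaussianReal {β K r : ℝ} {n : ℕ} {v : ℝ≥0} (hr : r ≠ 0)
    (hn : n ≠ 0) (hv : 2 * β * K * n * v = r ^ 2) :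
    (canonMeasure β K n).map (fun ω ↦ totalSpin n ω * r / n) ∗ gaussianReal 0 v =
      volume.tilted fun x ↦ -(n * Gfun β K (x / r)) := by
  have hv0 : v ≠ 0 := by
    exact_mod_cast right_ne_zero_of_mul (hv.trans_ne (pow_ne_zero 2 hr))
  have : IsProbabilityMeasure ((canonMeasure β K n).map fun ω ↦ totalSpin n ω * r / n) :=
    Measure.isProbabilityMeasure_map (measurable_of_countable _).aemeasurable
  have hdensity (x : ℝ) :
      ∫⁻ y, gaussianPDF y v x ∂((canonMeasure β K n).map fun ω ↦ totalSpin n ω * r / n) =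
        ENNReal.ofReal ((√(2 * Real.pi * v))⁻¹ * (1 + 2 * Real.exp (-β)) ^ n /
          (∑ ω : Fin n → Spin, Real.exp (-β * ham K n ω)) *
            Real.exp (-(n * Gfun β K (x / r)))) := by
    rw [lintegral_map (by fun_prop) (measurable_of_countable _)]
    simp only [gaussianPDF_def]
    rw [← ofReal_integral_eq_lintegral_ofReal .of_finite
      (.of_forall fun ω ↦ gaussianPDFReal_nonneg _ _ _), integral_canonMeasure]
    simp only [canonP, div_mul_eq_mul_div, ← Finset.sum_div,
      sum_exp_neg_ham_mul_gaussianPDFReal hr hn hv]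
  have hG := continuous_Gfun β K
  have hconv := conv_gaussianReal_eq_withDensity
    ((canonMeasure β K n).map fun ω ↦ totalSpin n ω * r / n) hv0
  simp only [hdensity] at hconv
  exact eq_tilted_of_eq_withDensity_mul_exp (by fun_prop) (by positivity) hconv

/-- The law of `S_n / n ^ γ` under `P_{n,β,K}`. -/
def scaledSpinLaw (β K γ : ℝ) (n : ℕ) : ProbabilityMeasure ℝ :=
  ⟨(canonMeasure β K n).map fun ω ↦ totalSpin n ω / (n : ℝ) ^ γ,
    Measure.isProbabilityMeasure_map (measurable_of_countable _).aemeasurable⟩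

theorem integral_scaledSpinLaw {β K γ : ℝ} {n : ℕ} {f : ℝ → ℝ} (hf : Measurable f) :
    ∫ x, f x ∂(scaledSpinLaw β K γ n : Measure ℝ) =
      ∑ ω, canonP β K n ω * f (totalSpin n ω / (n : ℝ) ^ γ) := by
  rw [← integral_canonMeasure]
  exact integral_map (measurable_of_countable _).aemeasurable hf.aestronglyMeasurable

theorem scaledSpinLaw_conv_gaussianReal {β K : ℝ} {m n : ℕ} {v : ℝ≥0} (hn : n ≠ 0)
    (hv : 2 * β * K * n * v = ((n : ℝ) ^ (m : ℝ)⁻¹) ^ 2) :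
    (scaledSpinLaw β K (1 - (m : ℝ)⁻¹) n : Measure ℝ) ∗ gaussianReal 0 v =
      volume.tilted fun x ↦ -(n * Gfun β K (x / (n : ℝ) ^ (m : ℝ)⁻¹)) := by
  have hn0 : (0 : ℝ) < n := by positivity
  rw [← map_totalSpin_conv_gaussianReal (Real.rpow_pos_of_pos hn0 _).ne' hn hv, scaledSpinLaw,
    ProbabilityMeasure.coe_mk]
  simp only [Real.rpow_sub hn0, Real.rpow_one, div_div_eq_mul_div]

theorem tendsto_scaledSpinLaw {β K L : ℝ} {m : ℕ} (hβK : 0 < β * K) (hm : Even m) (hm2 : 2 < m)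
    (hL : 0 < L) (hpos : ∀ z, z ≠ 0 → 0 < Gfun β K z)
    (hzero : Gfun β K ~[𝓝 0] fun z ↦ L * z ^ m) :
    Tendsto (scaledSpinLaw β K (1 - (m : ℝ)⁻¹)) atTop
      (𝓝 ⟨volume.tilted fun x ↦ -(L * x ^ m),
        isProbabilityMeasure_tilted (integrable_exp_neg_mul_pow hL hm (by lia))⟩) := by
  have hvariance := tendsto_real_toNNReal (tendsto_sq_rpow_inv_div (c := 2 * β * K) hm2)
  rw [Real.toNNReal_zero] at hvariance
  refine tendsto_of_tendsto_charFun_conv_gaussianReal hvariance fun t ↦ ?_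
  have hlaplace := (tendsto_integral_tilted_neg_mul_comp_div hm hm2.le hL
    (continuous_Gfun β K) hpos hzero (sq_isBigO_Gfun_cocompact hβK.ne')
    (g := fun x ↦ Complex.exp (t * x * Complex.I)) (C := 1)
    (by fun_prop) fun x ↦ by
      rw [← Complex.ofReal_mul, Complex.norm_exp_ofReal_mul_I]).comp tendsto_natCast_atTop_atTop
  simp only [charFun_apply_real, ProbabilityMeasure.coe_mk]
  refine hlaplace.congr' ?_
  filter_upwards [eventually_gt_atTop 0] with n hn
  have hn0 : (0 : ℝ) < n := by positivity
  rw [Function.comp_apply, scaledSpinLaw_conv_gaussianReal hn.ne']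
  have hprecision : 0 < 2 * β * K * n := mul_pos (by linarith) hn0
  rw [Real.coe_toNNReal _ (by positivity), mul_div_cancel₀ _ hprecision.ne']

theorem tendsto_sum_canonP_of_critical {β K : ℝ} {m : ℕ} (hw : 1 / 3 ≤ spinVariance β)
    (hK : 2 * β * K = (spinVariance β)⁻¹) (hm : Even m) (hm2 : 2 < m)
    (hlow : ∀ k < m, iteratedDeriv k (Gfun β K) 0 = 0) (hL : 0 < iteratedDeriv m (Gfun β K) 0)
    {f : ℝ → ℝ} (hf : Continuous f) (hbdd : ∃ C, ∀ x, |f x| ≤ C) :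
    Tendsto (fun n : ℕ ↦ ∑ ω, canonP β K n ω * f (totalSpin n ω / (n : ℝ) ^ (1 - (m : ℝ)⁻¹)))
      atTop
      (𝓝 ((∫ x, f x * Real.exp (-iteratedDeriv m (Gfun β K) 0 * x ^ m / m !)) /
        ∫ x, Real.exp (-iteratedDeriv m (Gfun β K) 0 * x ^ m / m !))) := by
  obtain ⟨C, hC⟩ := hbdd
  have hβK : 0 < β * K := by linarith [inv_pos.mpr (spinVariance_pos β)]
  have hzero := isEquivalent_taylor_of_iteratedDeriv_eq_zero (contDiff_Gfun β K) hlow hL.ne'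
  simp only [sub_zero] at hzero
  have hlaw := tendsto_scaledSpinLaw hβK hm hm2 (by positivity) (fun z ↦ Gfun_pos hw hK) hzero
  have hweak := ProbabilityMeasure.tendsto_iff_forall_integral_tendsto.mp hlaw
    (.ofNormedAddCommGroup f hf C hC)
  simp only [BoundedContinuousFunction.coe_ofNormedAddCommGroup,
    integral_scaledSpinLaw hf.measurable, ProbabilityMeasure.coe_mk, integral_tilted, smul_eq_mul,
    div_mul_eq_mul_div, integral_div, ← neg_mul, ← neg_div] at hweak
  simpa only [mul_comm (f _)] using hweak

/-- (i) For `0 < β < log 4` and `K = K_c^{(2)}(β)`, the distributions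
of `S_n/n^{3/4}` under `P_{n,β,K}` converge weakly to the distribution with density
proportional to `exp(−G_{β,K}⁽⁴⁾(0) x⁴/4!)`, where
`G_{β,K}⁽⁴⁾(0) = −(2βK)⁴ c_β⁽⁴⁾(0) > 0`.  (ii) For `β = log 4` and `K = K_c^{(2)}(β)`,
the distributions of `S_n/n^{5/6}` converge weakly to the distribution with density
proportional to `exp(−G_{β,K}⁽⁶⁾(0) x⁶/6!)`, where `G_{β,K}⁽⁶⁾(0) = 2(2βK)⁶/9`. -/
theorem nonclassical_limit_total_spin :
    (∀ β K : ℝ, 0 < β → β < Real.log 4 → K = Kc2 β →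
      (iteratedDeriv 4 (Gfun β K) 0 =
          -(2 * β * K) ^ 4 * iteratedDeriv 4 (cBeta β) 0 ∧
        0 < iteratedDeriv 4 (Gfun β K) 0) ∧
      ∀ f : ℝ → ℝ, Continuous f → (∃ C : ℝ, ∀ x, |f x| ≤ C) →
        Filter.Tendsto (fun n : ℕ =>
            ∑ ω : Fin n → Spin, canonP β K n ω *
              f (totalSpin n ω / (n : ℝ) ^ ((3 : ℝ) / 4)))
          Filter.atTop
          (nhds ((∫ x : ℝ, f x *
              Real.exp (-(iteratedDeriv 4 (Gfun β K) 0) * x ^ 4 / (Nat.factorial 4))) /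
            (∫ x : ℝ,
              Real.exp (-(iteratedDeriv 4 (Gfun β K) 0) * x ^ 4 / (Nat.factorial 4)))))) ∧
    (∀ β K : ℝ, β = Real.log 4 → K = Kc2 β →
      (iteratedDeriv 6 (Gfun β K) 0 = 2 * (2 * β * K) ^ 6 / 9 ∧
        0 < iteratedDeriv 6 (Gfun β K) 0) ∧
      ∀ f : ℝ → ℝ, Continuous f → (∃ C : ℝ, ∀ x, |f x| ≤ C) →
        Filter.Tendsto (fun n : ℕ =>
            ∑ ω : Fin n → Spin, canonP β K n ω *
              f (totalSpin n ω / (n : ℝ) ^ ((5 : ℝ) / 6)))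
          Filter.atTop
          (nhds ((∫ x : ℝ, f x *
              Real.exp (-(iteratedDeriv 6 (Gfun β K) 0) * x ^ 6 / (Nat.factorial 6))) /
            (∫ x : ℝ,
              Real.exp (-(iteratedDeriv 6 (Gfun β K) 0) * x ^ 6 / (Nat.factorial 6)))))) := by
  refine ⟨fun β K hβ hlog hKc ↦ ?_, fun β K hlog hKc ↦ ?_⟩
  · have hw : 1 / 3 < spinVariance β := spinVariance_log_four ▸ spinVariance_strictAnti hlog
    have hK : 2 * β * K = (spinVariance β)⁻¹ := hKc ▸ two_mul_mul_Kc2 hβ.ne'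
    have hpos := iteratedDeriv_four_Gfun_zero_pos hw hK
    refine ⟨⟨iteratedDeriv_Gfun_zero_of_two_lt β K (by norm_num), hpos⟩, fun f hf hbdd ↦ ?_⟩
    rw [show (3 : ℝ) / 4 = 1 - ((4 : ℕ) : ℝ)⁻¹ by norm_num]
    exact tendsto_sum_canonP_of_critical hw.le hK (by decide) (by decide)
      (fun _ ↦ iteratedDeriv_Gfun_zero_eq_zero_of_lt_four hK) hpos hf hbdd
  · have hw : spinVariance β = 1 / 3 := hlog ▸ spinVariance_log_four
    have hβ : β ≠ 0 := hlog ▸ (Real.log_pos (by norm_num)).ne'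
    have hK : 2 * β * K = (spinVariance β)⁻¹ := hKc ▸ two_mul_mul_Kc2 hβ
    have hsix := iteratedDeriv_six_Gfun_zero (K := K) hw
    have hpos : 0 < iteratedDeriv 6 (Gfun β K) 0 := by rw [hsix, hK, hw]; norm_num
    refine ⟨⟨hsix, hpos⟩, fun f hf hbdd ↦ ?_⟩
    rw [show (5 : ℝ) / 6 = 1 - ((6 : ℕ) : ℝ)⁻¹ by norm_num]
    exact tendsto_sum_canonP_of_critical hw.ge hK (by decide) (by decide)
      (fun _ ↦ iteratedDeriv_Gfun_zero_eq_zero_of_lt_six hw hK) hpos hf hbdd
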